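/- arXiv:1506.03432 — 2 statements merged into one kernel-verified Lean document; each statement's English description precedes it below -/
import Mathlib

section
/- No cardinal κ is 1-hyper^κ-inaccessible (where κ is identified with its initial ordinal). -/
/-- `κ` is `α`-hyper^`β`-inaccessible: (1) `κ` is inaccessible, (2) for every
`η < β` the cardinal `κ` is `κ`-hyper^`η`-inaccessible, and (3) for every
`γ < α` the set of `γ`-hyper^`β`-inaccessible cardinals below `κ` is unbounded
in `κ`.  Defined by recursion, first on `β` and then on `α`. -/
def HyperInacc (β α : Ordinal) (κ : Cardinal) : Prop :=
  κ.IsInaccessible ∧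
    (∀ η < β, HyperInacc η κ.ord κ) ∧
    (∀ γ < α, ∀ θ < κ, ∃ μ, μ < κ ∧ HyperInacc β γ μ ∧ θ < μ)
termination_by (β, α)

/-- No cardinal `κ` is `1`-hyper^`κ`-inaccessible (identifying `κ` with its
initial ordinal). -/
theorem not_one_hyper_kappa_inacc (κ : Cardinal) :
    ¬ HyperInacc κ.ord 1 κ := by
  induction κ using WellFoundedLT.induction with
  | ind κ ih =>
    intro h
    rw [HyperInacc] at h
    obtain ⟨h1, -, h3⟩ := h
    have h0 : (0 : Cardinal) < κ := lt_of_lt_of_le Cardinal.aleph0_pos h1.aleph0_lt.le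
    obtain ⟨μ, hμ, hh, hpos⟩ := h3 0 zero_lt_one 0 h0
    rw [HyperInacc] at hh
    have h4 := hh.2.1 μ.ord (Cardinal.ord_lt_ord.2 hμ)
    apply ih μ hμ
    rw [HyperInacc] at h4 ⊢
    refine ⟨h4.1, h4.2.1, fun γ hγ => h4.2.2 γ ?_⟩
    rw [Ordinal.lt_one_iff_zero] at hγ
    subst hγ
    exact Cardinal.ord_zero ▸ Cardinal.ord_lt_ord.2 hpos
end

section
/- If κ is a weakly compact cardinal, then κ is α-Mahlo for every ordinal α ≤ κ (where κ is identified with its initial ordinal). -/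
/-- `C` is a closed unbounded (club) subset of the ordinal `κ`: it is a set of
ordinals below `κ`, unbounded in `κ`, and contains every `δ < κ` that is a
limit point of `C`. -/
def IsClubIn (C : Set Ordinal) (κ : Ordinal) : Prop :=
  C ⊆ Set.Iio κ ∧
  (∀ θ < κ, ∃ γ ∈ C, θ < γ) ∧
  (∀ δ, 0 < δ → δ < κ → (∀ θ < δ, ∃ γ ∈ C, θ < γ ∧ γ < δ) → δ ∈ C)

/-- `S` is stationary in the ordinal `κ`: it meets every club subset of `κ`. -/
def IsStationaryIn (S : Set Ordinal) (κ : Ordinal) : Prop :=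
  ∀ C : Set Ordinal, IsClubIn C κ → (S ∩ C).Nonempty

/-- A cardinal `κ` is Mahlo if the set of inaccessible cardinals below `κ`
is stationary in `κ`. -/
def IsMahlo (κ : Cardinal) : Prop :=
  IsStationaryIn {γ | ∃ μ : Cardinal, μ.IsInaccessible ∧ μ.ord = γ} κ.ord

/-- `κ` is `α`-Mahlo: `κ` is Mahlo and, for every `β < α`, the set of `β`-Mahlo
cardinals below `κ` is stationary in `κ`.  Defined by recursion on `α`. -/
def AlphaMahlo (α : Ordinal) (κ : Cardinal) : Prop :=
  IsMahlo κ ∧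
    ∀ β < α,
      IsStationaryIn {γ | ∃ μ : Cardinal, AlphaMahlo β μ ∧ μ.ord = γ} κ.ord
termination_by α

universe u

/-- A cardinal `κ` is weakly compact if it is uncountable and satisfies the
partition property `κ → (κ)²₂`: for every coloring of the pairs of ordinals
below `κ` in two colors there is a homogeneous set `H ⊆ κ` of cardinality `κ`. -/
def IsWeaklyCompactCard (κ : Cardinal.{u}) : Prop :=
  Cardinal.aleph0 < κ ∧
    ∀ f : Ordinal.{u} → Ordinal.{u} → Fin 2,
      ∃ H : Set Ordinal.{u}, H ⊆ Set.Iio κ.ord ∧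
        Cardinal.mk H = Cardinal.lift.{u + 1} κ ∧
        ∃ i : Fin 2, ∀ a ∈ H, ∀ b ∈ H, a < b → f a b = i

open Set Filter

structure GoodF (K : Ordinal.{u}) (F : Filter Ordinal.{u}) : Prop where
  neBot : F.NeBot
  lt : ∀ᶠ a in F, a < K
  gt : ∀ t < K, ∀ᶠ a in F, t < a
  complete : ∀ μ < K, ∀ P : Ordinal.{u} → Ordinal.{u} → Prop,
    (∀ i < μ, ∀ᶠ a in F, P i a) → ∀ᶠ a in F, ∀ i < μ, P i a

theorem wc_unbdd {κ : Cardinal.{u}} (hk : Cardinal.aleph0 ≤ κ) {H : Set Ordinal.{u}}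
    (h2 : Cardinal.mk H = Cardinal.lift.{u + 1} κ) (t : Ordinal.{u}) (ht : t < κ.ord) :
    ∃ a ∈ H, t < a := by
  by_contra! hc
  have h3 : H ⊆ Iio (t + 1) := fun a ha => Order.lt_add_one_iff.2 (hc a ha)
  have h4 := Cardinal.mk_le_mk_of_subset h3
  rw [h2, Cardinal.mk_Iio_ordinal, Cardinal.lift_le] at h4
  have h5 : κ.ord ≤ t + 1 := Cardinal.ord_le.2 h4
  have := (Cardinal.isSuccLimit_ord hk).succ_lt ht
  rw [Order.succ_eq_add_one] at this
  exact absurd h5 (not_le.2 this)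

theorem wc_reg {κ : Cardinal.{u}} (h : IsWeaklyCompactCard κ) (μ : Ordinal.{u}) (hμ : μ < κ.ord)
    (t : Ordinal.{u} → Ordinal.{u}) (ht : ∀ i < μ, t i < κ.ord) :
    ∃ s < κ.ord, ∀ i < μ, t i ≤ s := by
  classical
  by_contra! hc
  have hex : ∀ s, ∃ i, s < κ.ord → i < μ ∧ s < t i := by
    intro s
    by_cases hs : s < κ.ord
    · obtain ⟨i, hi⟩ := hc s hs
      exact ⟨i, fun _ => hi⟩
    · exact ⟨0, fun h => absurd h hs⟩
  choose p hp using hex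
  obtain ⟨H, hHK, hH, i, hi⟩ := h.2 (fun a b => if p a = p b then 0 else 1)
  have hu := fun s hs => wc_unbdd h.1.le hH s hs
  by_cases hi0 : i = 0
  · subst hi0
    obtain ⟨a, ha, -⟩ := hu μ hμ
    have hpa := hp a (hHK ha)
    obtain ⟨b, hb, hb'⟩ := hu (max a (t (p a))) (max_lt (hHK ha) (ht _ hpa.1))
    have hab := lt_of_le_of_lt (le_max_left _ _) hb'
    have h1 := hi a ha b hb hab
    have h2 : p a = p b := by by_contra hne; simp [hne] at h1
    have h3 := (hp b (hHK hb)).2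
    rw [← h2] at h3
    exact absurd (lt_of_le_of_lt (le_max_right _ _) hb') (not_lt.2 h3.le)
  · have hinj : InjOn p H := by
      intro a ha b hb hab
      by_contra hne
      rcases lt_or_gt_of_ne hne with hlt | hlt
      · have := hi a ha b hb hlt
        simp [hab] at this; exact hi0 this.symm
      · have := hi b hb a ha hlt
        simp [hab] at this; exact hi0 this.symm
    have hle : Cardinal.mk H ≤ Cardinal.mk (Iio μ) := by
      rw [← Cardinal.mk_image_eq_of_injOn p H hinj]
      apply Cardinal.mk_le_mk_of_subset
      rintro _ ⟨a, ha, rfl⟩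
      exact (hp a (hHK ha)).1
    rw [hH, Cardinal.mk_Iio_ordinal, Cardinal.lift_le] at hle
    exact absurd (Cardinal.lt_ord.1 hμ) (not_lt.2 hle)

theorem wc_cohesive0 {κ : Cardinal.{u}} (h : IsWeaklyCompactCard κ)
    (X : Ordinal.{u} → Ordinal.{u} → Prop) :
    ∃ F : Filter Ordinal.{u}, GoodF κ.ord F ∧
      ∀ ξ < κ.ord, (∀ᶠ a in F, X ξ a) ∨ (∀ᶠ a in F, ¬ X ξ a) := by
  classical
  have hK0 : 0 < κ.ord := by
    rw [Cardinal.lt_ord]; simpa using lt_trans Cardinal.aleph0_pos h.1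
  obtain ⟨H, hHK, hH, i, hi⟩ := h.2 (fun a b =>
    if ∃ ξ < κ.ord, (∀ η < ξ, (X η a ↔ X η b)) ∧ ¬ X ξ a ∧ X ξ b then 1 else 0)
  have hu := fun s hs => wc_unbdd h.1.le hH s hs
  have key : ∀ ξ, ξ < κ.ord → ∃ t < κ.ord, (∀ a ∈ H, t < a → X ξ a) ∨ (∀ a ∈ H, t < a → ¬ X ξ a) := by
    intro ξ
    induction ξ using WellFoundedLT.induction with
    | _ ξ ih =>
    intro hξ
    have ih' : ∀ η, ∃ t, η < ξ → t < κ.ord ∧ ((∀ a ∈ H, t < a → X η a) ∨ (∀ a ∈ H, t < a → ¬ X η a)) := by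
      intro η
      by_cases hη : η < ξ
      · obtain ⟨t, ht⟩ := ih η hη (hη.trans hξ)
        exact ⟨t, fun _ => ht⟩
      · exact ⟨0, fun h => absurd h hη⟩
    choose t ht using ih'
    obtain ⟨s, hs, hts⟩ := wc_reg h ξ hξ t (fun η hη => (ht η hη).1)
    have hag : ∀ a ∈ H, ∀ b ∈ H, s < a → s < b → ∀ η < ξ, (X η a ↔ X η b) := by
      intro a ha b hb hsa hsb η hη
      have h1 := lt_of_le_of_lt (hts η hη) hsa
      have h2 := lt_of_le_of_lt (hts η hη) hsb
      rcases (ht η hη).2 with h3 | h3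
      · simp [h3 a ha h1, h3 b hb h2]
      · simp [h3 a ha h1, h3 b hb h2]
    by_cases hi0 : i = 0
    · subst hi0
      by_cases hex : ∃ a ∈ H, s < a ∧ ¬ X ξ a
      · obtain ⟨a, ha, hsa, hXa⟩ := hex
        refine ⟨a, hHK ha, Or.inr fun b hb hab hXb => ?_⟩
        have h1 := hi a ha b hb hab
        rw [if_pos ⟨ξ, hξ, hag a ha b hb hsa (hsa.trans hab), hXa, hXb⟩] at h1
        exact absurd h1 (by decide)
      · push Not at hex
        exact ⟨s, hs, Or.inl hex⟩
    · by_cases hex : ∃ a ∈ H, s < a ∧ X ξ a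
      · obtain ⟨a, ha, hsa, hXa⟩ := hex
        refine ⟨a, hHK ha, Or.inl fun b hb hab => ?_⟩
        have h1 := hi a ha b hb hab
        by_contra hXb
        split_ifs at h1 with hc
        · obtain ⟨ζ, hζ, hζ1, hζ2, hζ3⟩ := hc
          rcases lt_trichotomy ζ ξ with hl | hl | hl
          · exact hζ2 ((hag a ha b hb hsa (hsa.trans hab) ζ hl).2 hζ3)
          · subst hl; exact hζ2 hXa
          · exact hXb ((hζ1 ξ hl).1 hXa)
        · exact hi0 h1.symm
      · push Not at hex
        exact ⟨s, hs, Or.inr hex⟩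
  let F : Filter Ordinal.{u} :=
    { sets := {s | ∃ t < κ.ord, ∀ a ∈ H, t < a → a ∈ s}
      univ_sets := ⟨0, hK0, fun _ _ _ => trivial⟩
      sets_of_superset := by
        rintro x y ⟨t, ht, htx⟩ hxy
        exact ⟨t, ht, fun a ha h => hxy (htx a ha h)⟩
      inter_sets := by
        rintro x y ⟨t, ht, htx⟩ ⟨r, hr, hrx⟩
        exact ⟨max t r, max_lt ht hr, fun a ha h => ⟨htx a ha (lt_of_le_of_lt (le_max_left _ _) h),
          hrx a ha (lt_of_le_of_lt (le_max_right _ _) h)⟩⟩ }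
  have hF : ∀ P : Ordinal.{u} → Prop, (∀ᶠ a in F, P a) ↔ ∃ t < κ.ord, ∀ a ∈ H, t < a → P a :=
    fun P => Iff.rfl
  refine ⟨F, ⟨?_, ?_, ?_, ?_⟩, ?_⟩
  · refine ⟨fun hbot => ?_⟩
    have : ∀ᶠ a in F, False := by rw [hbot]; trivial
    obtain ⟨t, ht, h1⟩ := (hF _).1 this
    obtain ⟨a, ha, hta⟩ := hu t ht
    exact h1 a ha hta
  · exact (hF _).2 ⟨0, hK0, fun a ha _ => hHK ha⟩
  · intro t ht
    exact (hF _).2 ⟨t, ht, fun a ha h => h⟩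
  · intro μ hμ P hP
    have ih' : ∀ η, ∃ t, η < μ → t < κ.ord ∧ (∀ a ∈ H, t < a → P η a) := by
      intro η
      by_cases hη : η < μ
      · obtain ⟨t, ht⟩ := (hF _).1 (hP η hη)
        exact ⟨t, fun _ => ht⟩
      · exact ⟨0, fun h => absurd h hη⟩
    choose t ht using ih'
    obtain ⟨s, hs, hts⟩ := wc_reg h μ hμ t (fun η hη => (ht η hη).1)
    exact (hF _).2 ⟨s, hs, fun a ha hsa η hη => (ht η hη).2 a ha (lt_of_le_of_lt (hts η hη) hsa)⟩
  · intro ξ hξ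
    obtain ⟨t, ht, h1 | h1⟩ := key ξ hξ
    · exact Or.inl ((hF _).2 ⟨t, ht, h1⟩)
    · exact Or.inr ((hF _).2 ⟨t, ht, h1⟩)

theorem wc_cohesive {κ : Cardinal.{u}} (h : IsWeaklyCompactCard κ) {ι : Type (u+1)}
    (hι : Cardinal.mk ι ≤ Cardinal.lift.{u+1} κ)
    (X : ι → Ordinal.{u} → Prop) :
    ∃ F : Filter Ordinal.{u}, GoodF κ.ord F ∧
      ∀ i, (∀ᶠ a in F, X i a) ∨ (∀ᶠ a in F, ¬ X i a) := by
  have : Cardinal.mk ι ≤ Cardinal.mk (Iio κ.ord) := by simpa [Cardinal.mk_Iio_ordinal] using hι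
  obtain ⟨e⟩ := this
  obtain ⟨F, hF, hX⟩ := wc_cohesive0 h (fun ξ a => ∃ i, (e i : Ordinal) = ξ ∧ X i a)
  refine ⟨F, hF, fun i => ?_⟩
  have : ∀ a, (∃ j, (e j : Ordinal) = e i ∧ X j a) ↔ X i a := by
    intro a
    constructor
    · rintro ⟨j, hj, hX⟩
      rwa [← e.injective (Subtype.ext hj)]
    · exact fun hX => ⟨i, rfl, hX⟩
  simpa only [this] using hX (e i) (e i).2

theorem wc_strongLimit {κ : Cardinal.{u}} (h : IsWeaklyCompactCard κ) (ν : Cardinal.{u})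
    (hν : ν < κ) : 2 ^ ν < κ := by
  by_contra! hc
  have h1 : Cardinal.mk (Iio κ.ord) ≤ Cardinal.mk (Set (Iio ν.ord)) := by
    rw [Cardinal.mk_set, Cardinal.mk_Iio_ordinal, Cardinal.mk_Iio_ordinal]
    simp only [Cardinal.card_ord]
    rw [← Cardinal.lift_two_power, Cardinal.lift_le]
    exact hc
  obtain ⟨e⟩ := h1
  obtain ⟨F, hF, hX⟩ := wc_cohesive0 h (fun ξ a => ∃ (h1 : a < κ.ord) (h2 : ξ < ν.ord),
    (⟨ξ, h2⟩ : Iio ν.ord) ∈ e ⟨a, h1⟩)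
  have := hF.neBot
  have hνK : ν.ord < κ.ord := Cardinal.ord_lt_ord.2 hν
  have h2 : ∀ ξ < ν.ord, ∀ᶠ a in F, ((∃ (h1 : a < κ.ord) (h2 : ξ < ν.ord),
    (⟨ξ, h2⟩ : Iio ν.ord) ∈ e ⟨a, h1⟩) ↔ ∀ᶠ a in F, (∃ (h1 : a < κ.ord) (h2 : ξ < ν.ord),
    (⟨ξ, h2⟩ : Iio ν.ord) ∈ e ⟨a, h1⟩)) := by
    intro ξ hξ
    rcases hX ξ (hξ.trans hνK) with h3 | h3
    · filter_upwards [h3] with a ha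
      exact ⟨fun _ => h3, fun _ => ha⟩
    · filter_upwards [h3] with a ha
      refine ⟨fun h => absurd h ha, fun h => ?_⟩
      obtain ⟨b, hb, hb'⟩ := (h.and h3).exists
      exact absurd hb hb'
  have h3 := hF.complete _ hνK _ h2
  obtain ⟨a, ha, haK⟩ := (h3.and hF.lt).exists
  obtain ⟨b, ⟨hb, hbK⟩, hab⟩ := ((h3.and hF.lt).and (hF.gt a haK)).exists
  have : e ⟨a, haK⟩ = e ⟨b, hbK⟩ := by
    ext ⟨ξ, hξ⟩
    have := (ha ξ hξ).trans (hb ξ hξ).symm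
    constructor
    · intro h
      exact (this.1 ⟨haK, hξ, h⟩).2.2
    · intro h
      exact (this.2 ⟨hbK, hξ, h⟩).2.2
  have := congrArg Subtype.val (e.injective this)
  exact absurd this hab.ne

/-- Composition of the truncated functions along a list. -/
noncomputable def wordFn {ι : Type (u+1)} (f : ι → Ordinal.{u} → Ordinal.{u}) :
    List ι → Ordinal.{u} → Ordinal.{u}
  | [], a => a
  | i :: l, a => f i (wordFn f l a)

theorem wc_normal0 {κ : Cardinal.{u}} (h : IsWeaklyCompactCard κ) {ι : Type (u+1)}
    (hι : Cardinal.mk ι ≤ Cardinal.lift.{u+1} κ)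
    (f : ι → Ordinal.{u} → Ordinal.{u}) (hf : ∀ i a, 0 < a → f i a < a)
    (hf0 : ∀ i, f i 0 = 0) :
    ∃ F : Filter Ordinal.{u}, GoodF κ.ord F ∧
      ∀ i, ∃ c < κ.ord, ∀ᶠ a in F, f i a = c := by
  classical
  have hω : Ordinal.omega0 < κ.ord := by
    rw [Cardinal.lt_ord]; simpa using h.1
  have hK0 : 0 < κ.ord := lt_trans Ordinal.omega0_pos hω
  have hk' : Cardinal.aleph0 ≤ Cardinal.lift.{u+1} κ := by simpa using h.1.le
  have hcard : Cardinal.mk (List ι × Iio κ.ord) ≤ Cardinal.lift.{u+1} κ := by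
    rw [Cardinal.mk_prod, Cardinal.lift_id, Cardinal.lift_id, Cardinal.mk_Iio_ordinal,
      Cardinal.card_ord]
    calc _ ≤ Cardinal.lift.{u+1} κ * Cardinal.lift.{u+1} κ := by
            gcongr
            exact (Cardinal.mk_list_le_max ι).trans (max_le hk' hι)
      _ = _ := Cardinal.mul_eq_self hk'
  obtain ⟨F, hF, hX⟩ := wc_cohesive h hcard (fun p a => wordFn f p.1 a < p.2)
  have := hF.neBot
  have hX' : ∀ l, ∀ c < κ.ord, (∀ᶠ a in F, wordFn f l a < c) ∨ (∀ᶠ a in F, c ≤ wordFn f l a) := by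
    intro l c hc
    simpa only [not_lt] using hX (l, ⟨c, hc⟩)
  -- bounded words are constant
  have hbd : ∀ l, (∃ c < κ.ord, ∀ᶠ a in F, wordFn f l a < c) →
      ∃ c < κ.ord, ∀ᶠ a in F, wordFn f l a = c := by
    intro l hl
    let c := sInf {c | c < κ.ord ∧ ∀ᶠ a in F, wordFn f l a < c}
    obtain ⟨hcK, hc⟩ : c < κ.ord ∧ ∀ᶠ a in F, wordFn f l a < c := csInf_mem hl
    have hlt : ∀ d < c, ∀ᶠ a in F, d ≤ wordFn f l a := by
      intro d hd
      rcases hX' l d (hd.trans hcK) with h1 | h1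
      · exact absurd hd (not_lt.2 (csInf_le' ⟨hd.trans hcK, h1⟩))
      · exact h1
    have h2 := hF.complete c hcK _ hlt
    by_cases hs : ∃ d, c = d + 1
    · obtain ⟨d, hd⟩ := hs
      have hdc : d < c := by rw [hd]; exact lt_add_one d
      refine ⟨d, hdc.trans hcK, ?_⟩
      filter_upwards [hc, hlt d hdc] with a h3 h4
      rw [hd] at h3
      exact le_antisymm (Order.lt_add_one_iff.1 h3) h4
    · exfalso
      obtain ⟨a, ha, hac⟩ := (h2.and hc).exists
      have h5 : wordFn f l a + 1 < c := by
        refine lt_of_le_of_ne ?_ (fun h => hs ⟨_, h.symm⟩)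
        exact Order.add_one_le_of_lt hac
      exact absurd (ha _ h5) (not_le.2 (lt_add_one _))
  -- unbounded words
  let U : List ι → Prop := fun l => ∀ c < κ.ord, ∀ᶠ a in F, c ≤ wordFn f l a
  have hU : ∀ l, ¬ U l → ∃ c < κ.ord, ∀ᶠ a in F, wordFn f l a = c := by
    intro l hl
    apply hbd
    by_contra! hc
    apply hl
    intro c hcK
    exact (hX' l c hcK).resolve_left (fun h1 => (hc c hcK) (by simpa only [not_le] using h1))
  have hmin : ∃ l, U l ∧ ∀ i, ¬ U (i :: l) := by
    by_contra! hc
    have hc' : ∀ l, ∃ l', U l → U l' ∧ ∃ i, l' = i :: l := by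
      intro l
      by_cases hl : U l
      · obtain ⟨i, hi⟩ := hc l hl
        exact ⟨i :: l, fun _ => ⟨hi, i, rfl⟩⟩
      · exact ⟨[], fun h => absurd h hl⟩
    choose g hg using hc'
    let w : ℕ → List ι := fun n => Nat.rec [] (fun _ l => g l) n
    have hw : ∀ n, w (n+1) = g (w n) := fun n => rfl
    have hUw : ∀ n, U (w n) := by
      intro n
      induction n with
      | zero =>
        intro c hcK
        filter_upwards [hF.gt c hcK] with a ha
        exact ha.le
      | succ n ih => rw [hw]; exact (hg _ ih).1
    have h1 : ∀ n : ℕ, ∀ᶠ a in F, wordFn f (w (n+1)) a < wordFn f (w n) a := by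
      intro n
      filter_upwards [hUw n 1 (lt_trans Ordinal.one_lt_omega0 hω)] with a ha
      obtain ⟨i, hi⟩ := (hg _ (hUw n)).2
      rw [hw, hi]
      exact hf _ _ (lt_of_lt_of_le zero_lt_one ha)
    have h2 : ∀ᶠ a in F, ∀ i < Ordinal.omega0, ∀ n : ℕ, i = n →
        wordFn f (w (n+1)) a < wordFn f (w n) a := by
      refine hF.complete _ hω (fun i a => ∀ n : ℕ, i = n →
        wordFn f (w (n+1)) a < wordFn f (w n) a) ?_
      intro i hi
      obtain ⟨n, rfl⟩ := Ordinal.lt_omega0.1 hi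
      filter_upwards [h1 n] with a ha m hm
      have : n = m := by exact_mod_cast hm
      rwa [← this]
    obtain ⟨a, ha⟩ := h2.exists
    exact not_strictAnti_of_wellFoundedLT (fun n => wordFn f (w n) a)
      (strictAnti_nat_of_succ_lt fun n => ha n (Ordinal.natCast_lt_omega0 n) n rfl)
  obtain ⟨l, hl, hmin⟩ := hmin
  have hle : ∀ l a, wordFn f l a ≤ a := by
    intro l a
    induction l with
    | nil => exact le_rfl
    | cons i l ih =>
      refine le_trans ?_ ih
      change f i (wordFn f l a) ≤ _
      rcases eq_or_ne (wordFn f l a) 0 with h0 | h0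
      · rw [h0, hf0]
      · exact (hf _ _ (pos_iff_ne_zero.2 h0)).le
  refine ⟨F.map (wordFn f l), ⟨?_, ?_, ?_, ?_⟩, ?_⟩
  · exact inferInstance
  · rw [eventually_map]
    filter_upwards [hF.lt] with a ha
    exact lt_of_le_of_lt (hle l a) ha
  · intro t ht
    rw [eventually_map]
    have ht' : t + 1 < κ.ord := by
      simpa using (Cardinal.isSuccLimit_ord h.1.le).succ_lt ht
    filter_upwards [hl _ ht'] with a ha
    exact lt_of_lt_of_le (lt_add_one t) ha
  · intro μ hμ P hP
    exact hF.complete μ hμ (fun i a => P i (wordFn f l a)) hP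
  · intro i
    exact hU (i :: l) (hmin i)

theorem wc_normal {κ : Cardinal.{u}} (h : IsWeaklyCompactCard κ) {ι : Type (u+1)}
    (hι : Cardinal.mk ι ≤ Cardinal.lift.{u+1} κ)
    (f : ι → Ordinal.{u} → Ordinal.{u}) :
    ∃ F : Filter Ordinal.{u}, GoodF κ.ord F ∧
      ∀ i, (∀ᶠ a in F, f i a < a) → ∃ c < κ.ord, ∀ᶠ a in F, f i a = c := by
  classical
  obtain ⟨F, hF, hc⟩ := wc_normal0 h hι (fun i a => if f i a < a then f i a else 0)
    (by intro i a ha; split_ifs with h1 <;> assumption)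
    (by intro i; simp)
  refine ⟨F, hF, fun i hi => ?_⟩
  obtain ⟨c, hcK, hc⟩ := hc i
  refine ⟨c, hcK, ?_⟩
  filter_upwards [hi, hc] with a h1 h2
  rwa [if_pos h1] at h2

theorem inaccessible_of {a : Ordinal.{u}} (hω : Ordinal.omega0 < a)
    (hs : ¬ ∃ μ < a, ∃ c : Ordinal.{u} → Ordinal.{u}, (∀ i < μ, c i < a) ∧
      ∀ θ < a, ∃ i < μ, θ ≤ c i)
    (hp : ¬ ∃ ν < a, a.card ≤ 2 ^ ν.card) :
    ∃ μ : Cardinal.{u}, μ.IsInaccessible ∧ μ.ord = a := by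
  classical
  have h1 : a.cof.ord = a := by
    refine le_antisymm (Ordinal.ord_cof_le a) ?_
    by_contra! hlt
    obtain ⟨f, hf⟩ := Ordinal.exists_isFundamentalSeq (o := a) rfl
    apply hs
    refine ⟨_, hlt, fun i => if hi : i < a.cof.ord then f ⟨i, hi⟩ else 0, ?_, ?_⟩
    · intro i hi
      simp only [hi, dif_pos]
      exact (f ⟨i, hi⟩).2
    · intro θ hθ
      obtain ⟨_, ⟨⟨i, hi⟩, rfl⟩, hle⟩ := hf.isCofinal_range ⟨θ, hθ⟩
      refine ⟨i, hi, ?_⟩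
      have hi' : i < a.cof.ord := hi
      simp only [hi', dif_pos]
      exact hle
  have hca : a.card = a.cof := by
    conv_lhs => rw [← h1, Cardinal.card_ord]
  refine ⟨a.cof, ⟨?_, ?_, ?_⟩, h1⟩
  · rw [← Cardinal.ord_lt_ord, h1]; simpa using hω
  · rw [h1]
  · intro x hx
    by_contra! hle
    apply hp
    refine ⟨x.ord, ?_, ?_⟩
    · rw [← h1]; exact Cardinal.ord_lt_ord.2 hx
    · rw [hca, Cardinal.card_ord]; exact hle

theorem wc_reflect {κ : Cardinal.{u}} (h : IsWeaklyCompactCard κ) (β : Ordinal.{u})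
    (hβ : β < κ.ord) (S : Ordinal.{u} → Set Ordinal.{u})
    (hS : ∀ γ < β, IsStationaryIn (S γ) κ.ord) (D : Set Ordinal.{u}) (hD : IsClubIn D κ.ord) :
    ∃ μ : Cardinal.{u}, μ.IsInaccessible ∧ μ.ord ∈ D ∧ ∀ γ < β, IsStationaryIn (S γ) μ.ord := by
  classical
  by_contra! hno
  have hω : Ordinal.omega0 < κ.ord := by
    rw [Cardinal.lt_ord]; simpa using h.1
  have hK0 : 0 < κ.ord := lt_trans Ordinal.omega0_pos hω
  -- distance to D
  have he : ∀ a, ∃ θ, (a ∉ D → 0 < a → a < κ.ord → θ < a ∧ ∀ γ ∈ D, θ < γ → ¬ γ < a) ∧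
      (a ∈ D → θ = 0) := by
    intro a
    by_cases ha : a ∈ D
    · exact ⟨0, fun h => absurd ha h, fun _ => rfl⟩
    by_cases h1 : ∃ θ < a, ∀ γ ∈ D, θ < γ → ¬ γ < a
    · obtain ⟨θ, hθ⟩ := h1
      exact ⟨θ, fun _ _ _ => hθ, fun h => absurd h ha⟩
    · refine ⟨0, fun _ h0 hK => absurd (hD.2.2 a h0 hK ?_) ha, fun _ => rfl⟩
      push Not at h1
      exact h1
  choose e he he' using he
  -- singularity
  have hm : ∀ a, ∃ (μ : Ordinal.{u}) (c : Ordinal.{u} → Ordinal.{u}), 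
      ((∃ μ < a, ∃ c : Ordinal.{u} → Ordinal.{u}, (∀ i < μ, c i < a) ∧
      ∀ θ < a, ∃ i < μ, θ ≤ c i) → ∀ θ < a, ∃ i < μ, θ ≤ c i) ∧ 
      (0 < a → μ < a ∧ ∀ i < μ, c i < a) := by
    intro a
    by_cases ha : ∃ μ < a, ∃ c : Ordinal.{u} → Ordinal.{u}, (∀ i < μ, c i < a) ∧
      ∀ θ < a, ∃ i < μ, θ ≤ c i
    · obtain ⟨μ, hμ, c, hc1, hc2⟩ := ha
      exact ⟨μ, c, fun _ => hc2, fun _ => ⟨hμ, hc1⟩⟩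
    · exact ⟨0, fun _ => 0, fun h => absurd h ha, fun h => ⟨h, fun i hi => h⟩⟩
  choose m c hm hmc using hm
  -- strong limit
  have hn : ∀ a : Ordinal.{u}, ∃ ν : Ordinal.{u}, (0 < a → ν < a) ∧ ((∃ ν < a, a.card ≤ 2 ^ ν.card) → a.card ≤ 2 ^ ν.card) := by
    intro a
    by_cases ha : ∃ ν < a, a.card ≤ 2 ^ ν.card
    · obtain ⟨ν, h1, h2⟩ := ha
      exact ⟨ν, fun _ => h1, fun _ => h2⟩
    · exact ⟨0, fun h => h, fun h => absurd h ha⟩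
  choose n hn hn' using hn
  -- clubs
  have hC : ∀ a, ∃ (g : Ordinal.{u}) (C : Set Ordinal.{u}),
      (∃ μ : Cardinal.{u}, μ.IsInaccessible ∧ μ.ord = a) → a ∈ D →
        g < β ∧ IsClubIn C a ∧ S g ∩ C = ∅ := by
    intro a
    by_cases ha : (∃ μ : Cardinal.{u}, μ.IsInaccessible ∧ μ.ord = a) ∧ a ∈ D
    · obtain ⟨⟨μ, hμ, rfl⟩, h2⟩ := ha
      obtain ⟨γ, hγ, h3⟩ := hno μ hμ h2
      simp only [IsStationaryIn, not_forall] at h3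
      obtain ⟨C, hC, h4⟩ := h3
      exact ⟨γ, C, fun _ _ => ⟨hγ, hC, Set.not_nonempty_iff_eq_empty.1 h4⟩⟩
    · exact ⟨0, ∅, fun h1 h2 => absurd ⟨h1, h2⟩ ha⟩
  choose g C hC using hC
  have hx : ∀ a θ, ∃ x, (∃ y ∈ C a, θ < y) → x ∈ C a ∧ θ < x := by
    intro a θ
    by_cases h1 : ∃ y ∈ C a, θ < y
    · obtain ⟨y, hy⟩ := h1
      exact ⟨y, fun _ => hy⟩
    · exact ⟨0, fun h => absurd h h1⟩
  choose x hx using hx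
  let fam : Fin 6 → Ordinal.{u} → Ordinal.{u} → Ordinal.{u} :=
    ![fun _ a => e a, fun _ a => m a, fun ξ a => if ξ < m a then c a ξ else 0,
      fun _ a => n a, fun _ a => g a, fun ξ a => x a ξ]
  have hk' : Cardinal.aleph0 ≤ Cardinal.lift.{u+1} κ := by simpa using h.1.le
  have hcard : Cardinal.mk (Fin 6 × Iio κ.ord) ≤ Cardinal.lift.{u+1} κ := by
    rw [Cardinal.mk_prod, Cardinal.lift_id', Cardinal.mk_Iio_ordinal, Cardinal.card_ord]
    refine (Cardinal.mul_le_max_of_aleph0_le_right ?_).trans (max_le ?_ ?_)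
    · simpa using h.1.le
    · exact le_trans (le_of_lt (by simp)) hk'
    · simp
  obtain ⟨F, hF, hconst⟩ := wc_normal h hcard (fun p a => fam p.1 p.2 a)
  have := hF.neBot
  have hpos := hF.gt 0 hK0
  -- eventually in D
  have hFD : ∀ᶠ a in F, a ∈ D := by
    obtain ⟨θ, hθ, h1⟩ := hconst (0, ⟨0, hK0⟩) (by
      change ∀ᶠ a in F, e a < a
      filter_upwards [hpos, hF.lt] with a h1 h2
      by_cases ha : a ∈ D
      · rw [he' a ha]; exact h1
      · exact (he a ha h1 h2).1)
    change ∀ᶠ a in F, e a = θ at h1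
    obtain ⟨γ, hγ, hθγ⟩ := hD.2.1 θ hθ
    filter_upwards [h1, hF.gt γ (hD.1 hγ), hpos, hF.lt] with a h1 h2 h3 h4
    by_contra ha
    exact (he a ha h3 h4).2 γ hγ (h1 ▸ hθγ) h2
  have hFS : ∀ᶠ a in F, ¬ ∃ μ < a, ∃ c : Ordinal.{u} → Ordinal.{u}, (∀ i < μ, c i < a) ∧
      ∀ θ < a, ∃ i < μ, θ ≤ c i := by
    obtain ⟨μ, hμ, h1⟩ := hconst (1, ⟨0, hK0⟩) (by
      change ∀ᶠ a in F, m a < a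
      filter_upwards [hpos] with a h1
      exact (hmc a h1).1)
    change ∀ᶠ a in F, m a = μ at h1
    have h2 : ∀ ξ, ∃ d, ξ < μ → d < κ.ord ∧ ∀ᶠ a in F, c a ξ = d := by
      intro ξ
      by_cases hξ : ξ < μ
      · obtain ⟨d, hd, h2⟩ := hconst (2, ⟨ξ, hξ.trans hμ⟩) (by
          change ∀ᶠ a in F, (if ξ < m a then c a ξ else 0) < a
          filter_upwards [hpos] with a h1
          split_ifs with h3
          · exact (hmc a h1).2 ξ h3
          · exact h1)
        change ∀ᶠ a in F, (if ξ < m a then c a ξ else 0) = d at h2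
        refine ⟨d, fun _ => ⟨hd, ?_⟩⟩
        filter_upwards [h1, h2] with a h1 h2
        rwa [h1, if_pos hξ] at h2
      · exact ⟨0, fun h => absurd h hξ⟩
    choose d hd using h2
    have h3 := hF.complete μ hμ (fun ξ a => c a ξ = d ξ) (fun ξ hξ => (hd ξ hξ).2)
    obtain ⟨s, hs, hds⟩ := wc_reg h μ hμ d (fun ξ hξ => (hd ξ hξ).1)
    have hs' : s + 1 < κ.ord := by
      simpa using (Cardinal.isSuccLimit_ord h.1.le).succ_lt hs
    filter_upwards [h1, h3, hF.gt _ hs'] with a h1 h3 h4 hsing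
    obtain ⟨i, hi, hle⟩ := hm a hsing (s+1) h4
    rw [h1] at hi
    rw [h3 i hi] at hle
    exact absurd (hle.trans (hds i hi)) (not_le.2 (lt_add_one s))
  have hFP : ∀ᶠ a in F, ¬ ∃ ν < a, a.card ≤ 2 ^ ν.card := by
    obtain ⟨ν, hν, h1⟩ := hconst (3, ⟨0, hK0⟩) (by
      change ∀ᶠ a in F, n a < a
      filter_upwards [hpos] with a h1
      exact hn a h1)
    change ∀ᶠ a in F, n a = ν at h1
    have h2 := wc_strongLimit h _ (wc_strongLimit h _ (Cardinal.lt_ord.1 hν))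
    filter_upwards [h1, hF.gt _ (Cardinal.ord_lt_ord.2 h2)] with a h1 h3 h4
    have h5 := hn' a h4
    rw [h1] at h5
    have h6 := Cardinal.ord_le.1 h3.le
    exact absurd (h6.trans h5) (not_le.2 (Cardinal.cantor _))
  have hFC : ∀ᶠ a in F, g a < β ∧ IsClubIn (C a) a ∧ S (g a) ∩ C a = ∅ := by
    filter_upwards [hFD, hFS, hFP, hF.gt _ hω] with a h1 h2 h3 h4
    exact hC a (inaccessible_of h4 h2 h3) h1
  obtain ⟨γ, hγ, h1⟩ := hconst (4, ⟨0, hK0⟩) (by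
    change ∀ᶠ a in F, g a < a
    filter_upwards [hFC, hF.gt β hβ] with a h1 h2
    exact h1.1.trans h2)
  change ∀ᶠ a in F, g a = γ at h1
  have hγβ : γ < β := by
    obtain ⟨a, h2, h3⟩ := (h1.and hFC).exists
    rw [← h2]; exact h3.1
  have hclub : IsClubIn {ξ | ξ < κ.ord ∧ ∀ᶠ a in F, ξ ∈ C a} κ.ord := by
    refine ⟨fun ξ hξ => hξ.1, ?_, ?_⟩
    · intro θ hθ
      have h2 : ∀ᶠ a in F, x a θ ∈ C a ∧ θ < x a θ := by
        filter_upwards [hFC, hF.gt θ hθ] with a h2 h3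
        obtain ⟨y, hy⟩ := h2.2.1.2.1 θ h3
        exact hx a θ ⟨y, hy⟩
      obtain ⟨y, hy, h3⟩ := hconst (5, ⟨θ, hθ⟩) (by
        change ∀ᶠ a in F, x a θ < a
        filter_upwards [hFC, h2] with a h2 h3
        exact h2.2.1.1 h3.1)
      change ∀ᶠ a in F, x a θ = y at h3
      refine ⟨y, ⟨hy, ?_⟩, ?_⟩
      · filter_upwards [h2, h3] with a h2 h3
        exact h3 ▸ h2.1
      · obtain ⟨a, h2, h3⟩ := (h2.and h3).exists
        exact h3 ▸ h2.2
    · intro δ hδ0 hδ hlim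
      refine ⟨hδ, ?_⟩
      have h2 := hF.complete δ hδ (fun θ a => ∃ y ∈ C a, θ < y ∧ y < δ) (by
        intro θ hθ
        obtain ⟨y, hy, h3⟩ := hlim θ hθ
        filter_upwards [hy.2] with a ha
        exact ⟨y, ha, h3⟩)
      filter_upwards [h2, hFC, hF.gt δ hδ] with a h2 h3 h4
      exact h3.2.1.2.2 δ hδ0 h4 h2
  obtain ⟨ξ, hξS, hξ, hξC⟩ := hS γ hγβ _ hclub
  obtain ⟨a, ⟨h2, h3⟩, h4⟩ := ((h1.and hFC).and hξC).exists
  have : ξ ∈ S (g a) ∩ C a := ⟨h2 ▸ hξS, h4⟩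
  rw [h3.2.2] at this
  exact this

theorem wc_isMahlo {κ : Cardinal.{u}} (h : IsWeaklyCompactCard κ) : IsMahlo κ := by
  intro D hD
  have hK0 : 0 < κ.ord := by
    rw [Cardinal.lt_ord]; simpa using lt_trans Cardinal.aleph0_pos h.1
  obtain ⟨μ, h1, h2, -⟩ := wc_reflect h 0 hK0 (fun _ => ∅)
    (fun γ hγ => absurd hγ (not_lt.2 (zero_le))) D hD
  exact ⟨μ.ord, ⟨μ, h1, rfl⟩, h2⟩

theorem wc_stat {κ : Cardinal.{u}} (h : IsWeaklyCompactCard κ) (β : Ordinal.{u}) :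
    β < κ.ord → IsStationaryIn {γ | ∃ μ : Cardinal.{u}, AlphaMahlo β μ ∧ μ.ord = γ} κ.ord := by
  classical
  induction β using WellFoundedLT.induction with
  | _ β ih =>
  intro hβ D hD
  have hβ' : β + 1 < κ.ord := by
    simpa using (Cardinal.isSuccLimit_ord h.1.le).succ_lt hβ
  obtain ⟨μ, h1, h2, h3⟩ := wc_reflect h (β + 1) hβ'
    (fun γ => if γ < β then {δ | ∃ μ : Cardinal.{u}, AlphaMahlo γ μ ∧ μ.ord = δ} else
      {δ | ∃ μ : Cardinal.{u}, μ.IsInaccessible ∧ μ.ord = δ}) (by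
      intro γ _
      split_ifs with hγ
      · exact ih γ hγ (hγ.trans hβ)
      · exact wc_isMahlo h) D hD
  refine ⟨μ.ord, ⟨μ, ?_, rfl⟩, h2⟩
  rw [AlphaMahlo]
  refine ⟨?_, ?_⟩
  · have := h3 β (lt_add_one β)
    simp only [lt_irrefl, if_false] at this
    exact this
  · intro γ hγ
    have := h3 γ (hγ.trans (lt_add_one β))
    simpa only [hγ, if_true] using this

/-- If `κ` is a weakly compact cardinal, then `κ` is `α`-Mahlo for every
ordinal `α ≤ κ` (identifying `κ` with its initial ordinal). -/
theorem alphaMahlo_of_weaklyCompact {κ : Cardinal}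
    (h : IsWeaklyCompactCard κ) : ∀ α ≤ κ.ord, AlphaMahlo α κ := by
  intro α hα
  rw [AlphaMahlo]
  exact ⟨wc_isMahlo h, fun β hβ => wc_stat h β (lt_of_lt_of_le hβ hα)⟩
end
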